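/- arXiv:2107.14097 — 2 statements merged into one kernel-verified Lean document; each statement's English description precedes it below -/
import Mathlib

section
/- Correctness of the reduction for Theorem 7 (NP-hardness of destructive coalitional manipulation under Borda): let X_1 ≤ … ≤ X_n be positive integers with Σ_{i=1}^n X_i = n(n+1). Let O consist of the n+4 outcomes x_1,…,x_n, b_1, b_2, d, e, with a fixed tie-breaking order that prefers b_1 to d and to every x_i. Let p⃗ be any profile of Borda votes whose total scores are: e gets 4n+13+C, d gets 2n+6+C, each x_i gets 2n+6+C−X_i, b_1 gets C, and b_2 gets y < C (for some constant C), so that F(p⃗) = (e, d, x_1,…,x_n, b_1, b_2). Let p_o = (b_1, b_2, e, x_1,…,x_n, d). Then there exist two Borda manipulator votes p⃗_M such that e ∉ RC(F(p⃗ ∪ p⃗_M), p_o) if and only if there exist permutations σ and π of {1,…,n} such that σ(i) + π(i) = X_i for all 1 ≤ i ≤ n. -/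
open Finset
open scoped Classical

variable {O : Type*} [Fintype O] [DecidableEq O]

/-- A vote is a strict total order on the outcome set `O`, represented by its position
function: `p o` is the number of outcomes that `o` is preferred over, so the most
preferred outcome has position `m - 1` and the least preferred position `0`. -/
def IsVote (p : O → ℕ) : Prop :=
  Function.Injective p ∧ ∀ o : O, p o < Fintype.card O

/-- The total score of candidate `c` under the scoring vector `sc` (`sc j` is the number
of points awarded to the candidate at position `j`) for the profile `P`. -/
def score (sc : ℕ → ℤ) (P : List (O → ℕ)) (c : O) : ℤ :=
  (P.map fun q => sc (q c)).sum

/-- The positional scoring rule used as a social welfare function: candidates are ordered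
by decreasing total score, ties being broken by the fixed strict tie-breaking order `tb`
(a smaller `tb`-value means preferred by the tie-breaking order).  The output is again a
position function: the position of `c` is the number of candidates ranked below `c`. -/
def swf (sc : ℕ → ℤ) (tb : O → ℕ) (P : List (O → ℕ)) : O → ℕ := fun c =>
  (univ.filter fun c' =>
      score sc P c' < score sc P c ∨ (score sc P c' = score sc P c ∧ tb c < tb c')).card

/-- `topSet p j = A^j(p)`, the set of the `j` most preferred outcomes of `p`. -/
def topSet (p : O → ℕ) (j : ℕ) : Finset O :=
  univ.filter fun o => Fintype.card O - j ≤ p o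

/-- The least `j ≥ 1` for which `A^j(p_t) ∩ A^j(p_o)` is nonempty, i.e. the iteration at
which the Rational Compromise rule terminates. -/
noncomputable def rcIndex (pt po : O → ℕ) : ℕ :=
  sInf {j | 1 ≤ j ∧ (topSet pt j ∩ topSet po j).Nonempty}

/-- The Rational Compromise bargaining rule: `A^j(p_t) ∩ A^j(p_o)` for the least `j ≥ 1`
making this intersection nonempty. -/
noncomputable def RC (pt po : O → ℕ) : Finset O :=
  topSet pt (rcIndex pt po) ∩ topSet po (rcIndex pt po)

/-- The `n` most preferred members of `S` according to the ranking `r`. -/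
def topWithin (r : O → ℕ) (S : Finset O) (n : ℕ) : Finset O :=
  S.filter fun o => (S.filter fun o' => r o < r o').card < n

/-- The `n` least preferred members of `S` according to the ranking `r`. -/
def botWithin (r : O → ℕ) (S : Finset O) (n : ℕ) : Finset O :=
  S.filter fun o => (S.filter fun o' => r o' < r o).card < n

/-- The vote built by the algorithms from a current ranking `r` and a set `H`:
the members of `H` occupy the `|H|` highest positions in reverse order of `r`
(the `r`-least preferred member of `H` is placed highest), and the members of `O ∖ H`
occupy the remaining lowest positions in reverse order of `r` (the `r`-most preferred
of them is placed lowest). -/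
def buildVote (r : O → ℕ) (H : Finset O) : O → ℕ := fun o =>
  if o ∈ H then Fintype.card O - H.card + (H.filter fun h => r o < r h).card
  else (univ.filter fun c => c ∉ H ∧ r o < r c).card

/-- `H^i` for the constructive algorithms: the preferred outcome `p` together with the
`i - 1` most preferred outcomes of `p_t` that do not belong to `A^i(p_o)`. -/
def Hset (pt po : O → ℕ) (p : O) (i : ℕ) : Finset O :=
  insert p (topWithin pt ((univ \ topSet po i).erase p) (i - 1))

/-- `H^i` for the destructive algorithms: `p*`, the most preferred outcome of `p_t` other
than `e` that belongs to `A^i(p_o)`, together with the `i - 1` most preferred outcomes of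
`p_t` other than `e` and `p*`. -/
def HsetD (pt po : O → ℕ) (e : O) (i : ℕ) : Finset O :=
  topWithin pt ((topSet po i).erase e) 1 ∪
    topWithin pt ((univ.erase e) \ topWithin pt ((topSet po i).erase e) 1) (i - 1)

/-- The manipulator profile built by Algorithm 2 (for a fixed iteration whose set is `H`)
after the given number of stages: at each stage one more vote is appended, built from the
current social ranking `F(p⃗ ∪ p⃗_M)`. -/
def stageProfile (sc : ℕ → ℤ) (tb : O → ℕ) (P : List (O → ℕ)) (H : Finset O) :
    ℕ → List (O → ℕ)
  | 0 => []
  | n + 1 =>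
      stageProfile sc tb P H n ++
        [buildVote (swf sc tb (P ++ stageProfile sc tb P H n)) H]

/-- The vote constructed by Algorithm 2 at stage `ℓ` (1-indexed). -/
def stageVote (sc : ℕ → ℤ) (tb : O → ℕ) (P : List (O → ℕ)) (H : Finset O) (ℓ : ℕ) :
    O → ℕ :=
  buildVote (swf sc tb (P ++ stageProfile sc tb P H (ℓ - 1))) H

/-- The sets `U^i_s`:  `U^i_0` consists of the member of `H^i` with the lowest position in
`p_t`, and `U^i_{s+1}` adds every candidate ranked above some member of `U^i_s` by the
stage-`l` vote (`1 ≤ l < k`) but below some member of `U^i_s` by the stage-`(l+1)` vote. -/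
noncomputable def Uaux (sc : ℕ → ℤ) (tb : O → ℕ) (P : List (O → ℕ)) (pt : O → ℕ)
    (H : Finset O) (k : ℕ) : ℕ → Finset O
  | 0 => botWithin pt H 1
  | s + 1 =>
      Uaux sc tb P pt H k s ∪
        univ.filter fun u =>
          ∃ l, 1 ≤ l ∧ l < k ∧
            (∃ u' ∈ Uaux sc tb P pt H k s,
              stageVote sc tb P H l u' < stageVote sc tb P H l u) ∧
            (∃ u' ∈ Uaux sc tb P pt H k s,
              stageVote sc tb P H (l + 1) u < stageVote sc tb P H (l + 1) u')

/-- `U^i = ⋃ₛ U^i_s`. -/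
noncomputable def Uset (sc : ℕ → ℤ) (tb : O → ℕ) (P : List (O → ℕ)) (pt : O → ℕ)
    (H : Finset O) (k : ℕ) : Finset O :=
  univ.filter fun u => ∃ s, u ∈ Uaux sc tb P pt H k s

/-- The sets `D^i_s`: `D^i_0` consists of the member of `O ∖ H^i` with the highest position
in `p_t`, and `D^i_{s+1}` adds every candidate ranked below some member of `D^i_s` by the
stage-`l` vote (`1 ≤ l < k`) but above some member of `D^i_s` by the stage-`(l+1)` vote. -/
noncomputable def Daux (sc : ℕ → ℤ) (tb : O → ℕ) (P : List (O → ℕ)) (pt : O → ℕ)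
    (H : Finset O) (k : ℕ) : ℕ → Finset O
  | 0 => topWithin pt (univ \ H) 1
  | s + 1 =>
      Daux sc tb P pt H k s ∪
        univ.filter fun d =>
          ∃ l, 1 ≤ l ∧ l < k ∧
            (∃ d' ∈ Daux sc tb P pt H k s,
              stageVote sc tb P H l d < stageVote sc tb P H l d') ∧
            (∃ d' ∈ Daux sc tb P pt H k s,
              stageVote sc tb P H (l + 1) d' < stageVote sc tb P H (l + 1) d)

/-- `D^i = ⋃ₛ D^i_s`. -/
noncomputable def Dset (sc : ℕ → ℤ) (tb : O → ℕ) (P : List (O → ℕ)) (pt : O → ℕ)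
    (H : Finset O) (k : ℕ) : Finset O :=
  univ.filter fun d => ∃ s, d ∈ Daux sc tb P pt H k s

/-- The Borda scoring vector `(m-1, m-2, …, 1, 0)`: position `j` gets `j` points. -/
def bordaVec : ℕ → ℤ := fun j => (j : ℤ)

/-- The `x`-approval scoring vector for `m` candidates: the `x` highest positions get one
point, the rest get zero. -/
def approvalVec (m x : ℕ) : ℕ → ℤ := fun j => if m ≤ j + x then 1 else 0

/-- `sc` is a scoring vector for `m` candidates: `s_{m-1} ≥ … ≥ s_0 ≥ 0` and
`s_{m-1} > s_0`. -/
def IsScoringVector (m : ℕ) (sc : ℕ → ℤ) : Prop :=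
  (∀ j, j + 1 < m → sc j ≤ sc (j + 1)) ∧ 0 ≤ sc 0 ∧ sc 0 < sc (m - 1)

/-- Algorithm 1 (constructive single-voter manipulation) returns the vote `pa`:
the guard `pos(p, p_o) ≥ ⌈m/2⌉` holds and `pa` is the vote built at the first iteration
`i ∈ {1, …, ⌈m/2⌉}` at which the manipulation check succeeds. -/
def alg1Returns (sc : ℕ → ℤ) (tb : O → ℕ) (P : List (O → ℕ)) (po : O → ℕ) (p : O)
    (pa : O → ℕ) : Prop :=
  (Fintype.card O + 1) / 2 ≤ po p ∧
    ∃ i, 1 ≤ i ∧ i ≤ (Fintype.card O + 1) / 2 ∧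
      pa = buildVote (swf sc tb P) (Hset (swf sc tb P) po p i) ∧
      RC (swf sc tb (P ++ [pa])) po = {p} ∧
      ∀ j, 1 ≤ j → j < i →
        RC (swf sc tb (P ++ [buildVote (swf sc tb P) (Hset (swf sc tb P) po p j)])) po ≠
          {p}

/-- Algorithm 2 (constructive coalitional manipulation) run with `k` manipulators returns
the profile `PM`: the guard `pos(p, p_o) ≥ ⌈m/2⌉` holds and `PM` is the `k`-stage profile
built at the first iteration `i ∈ {1, …, ⌈m/2⌉}` at which the manipulation check succeeds. -/
def alg2Returns (sc : ℕ → ℤ) (tb : O → ℕ) (P : List (O → ℕ)) (po : O → ℕ) (p : O)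
    (k : ℕ) (PM : List (O → ℕ)) : Prop :=
  (Fintype.card O + 1) / 2 ≤ po p ∧
    ∃ i, 1 ≤ i ∧ i ≤ (Fintype.card O + 1) / 2 ∧
      PM = stageProfile sc tb P (Hset (swf sc tb P) po p i) k ∧
      RC (swf sc tb (P ++ PM)) po = {p} ∧
      ∀ j, 1 ≤ j → j < i →
        RC (swf sc tb (P ++ stageProfile sc tb P (Hset (swf sc tb P) po p j) k)) po ≠ {p}

/-- The modified Algorithm 1 (destructive single-voter manipulation) returns the vote
`pa`: the guard `pos(e, p_o) < ⌊m/2⌋` fails and `pa` is the vote built at the first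
iteration `i ∈ {1, …, ⌈m/2⌉}` at which `e` is excluded from the Rational Compromise. -/
def alg1ReturnsD (sc : ℕ → ℤ) (tb : O → ℕ) (P : List (O → ℕ)) (po : O → ℕ) (e : O)
    (pa : O → ℕ) : Prop :=
  Fintype.card O / 2 ≤ po e ∧
    ∃ i, 1 ≤ i ∧ i ≤ (Fintype.card O + 1) / 2 ∧
      pa = buildVote (swf sc tb P) (HsetD (swf sc tb P) po e i) ∧
      e ∉ RC (swf sc tb (P ++ [pa])) po ∧
      ∀ j, 1 ≤ j → j < i →
        e ∈ RC (swf sc tb (P ++ [buildVote (swf sc tb P) (HsetD (swf sc tb P) po e j)])) po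

/-- The modified Algorithm 2 (destructive coalitional manipulation) run with `k`
manipulators returns the profile `PM`: the guard `pos(e, p_o) < ⌊m/2⌋` fails and `PM` is
the `k`-stage profile built at the first iteration `i ∈ {1, …, ⌈m/2⌉}` at which `e` is
excluded from the Rational Compromise. -/
def alg2ReturnsD (sc : ℕ → ℤ) (tb : O → ℕ) (P : List (O → ℕ)) (po : O → ℕ) (e : O)
    (k : ℕ) (PM : List (O → ℕ)) : Prop :=
  Fintype.card O / 2 ≤ po e ∧
    ∃ i, 1 ≤ i ∧ i ≤ (Fintype.card O + 1) / 2 ∧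
      PM = stageProfile sc tb P (HsetD (swf sc tb P) po e i) k ∧
      e ∉ RC (swf sc tb (P ++ PM)) po ∧
      ∀ j, 1 ≤ j → j < i →
        e ∈ RC (swf sc tb (P ++ stageProfile sc tb P (HsetD (swf sc tb P) po e j) k)) po

/-- The set `U^i` arising from running the `k` stages of Algorithm 2 at iteration `i`. -/
noncomputable def UsetAlg (sc : ℕ → ℤ) (tb : O → ℕ) (P : List (O → ℕ)) (po : O → ℕ)
    (p : O) (i k : ℕ) : Finset O :=
  Uset sc tb P (swf sc tb P) (Hset (swf sc tb P) po p i) k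

/-- The set `D^i` arising from running the `k` stages of Algorithm 2 at iteration `i`. -/
noncomputable def DsetAlg (sc : ℕ → ℤ) (tb : O → ℕ) (P : List (O → ℕ)) (po : O → ℕ)
    (p : O) (i k : ℕ) : Finset O :=
  Dset sc tb P (swf sc tb P) (Hset (swf sc tb P) po p i) k

/-- The vote constructed at stage `ℓ` of iteration `i` of Algorithm 2. -/
def stageVoteAlg (sc : ℕ → ℤ) (tb : O → ℕ) (P : List (O → ℕ)) (po : O → ℕ)
    (p : O) (i ℓ : ℕ) : O → ℕ :=
  stageVote sc tb P (Hset (swf sc tb P) po p i) ℓ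

/-- `s_ℓ(c)`: the total score of candidate `c` in `F(p⃗ ∪ p⃗_M)` after stage `ℓ` of
iteration `i` of Algorithm 2. -/
def stageScoreAlg (sc : ℕ → ℤ) (tb : O → ℕ) (P : List (O → ℕ)) (po : O → ℕ)
    (p : O) (i ℓ : ℕ) (c : O) : ℤ :=
  score sc (P ++ stageProfile sc tb P (Hset (swf sc tb P) po p i) ℓ) c

/-- `F(p⃗ ∪ p⃗_M)` after stage `ℓ` of iteration `i` of Algorithm 2. -/
def stageSwfAlg (sc : ℕ → ℤ) (tb : O → ℕ) (P : List (O → ℕ)) (po : O → ℕ)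
    (p : O) (i ℓ : ℕ) : O → ℕ :=
  swf sc tb (P ++ stageProfile sc tb P (Hset (swf sc tb P) po p i) ℓ)

/-- The outcome `x_{i+1}` of the destructive reduction. -/
def xOutD (n : ℕ) (i : Fin n) : Fin n ⊕ Fin 4 := Sum.inl i
/-- The outcome `b_1` of the destructive reduction. -/
def b1Out (n : ℕ) : Fin n ⊕ Fin 4 := Sum.inr 0
/-- The outcome `b_2` of the destructive reduction. -/
def b2Out (n : ℕ) : Fin n ⊕ Fin 4 := Sum.inr 1
/-- The outcome `d` of the destructive reduction. -/
def dOut (n : ℕ) : Fin n ⊕ Fin 4 := Sum.inr 2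
/-- The outcome `e` of the destructive reduction. -/
def eOut (n : ℕ) : Fin n ⊕ Fin 4 := Sum.inr 3

/-- `F(p⃗) = (e, d, x_1, …, x_n, b_1, b_2)` as a position function
(`m = n + 4`, most preferred has position `m − 1 = n + 3`). -/
def ptTargetD (n : ℕ) : Fin n ⊕ Fin 4 → ℕ
  | Sum.inl i => n + 1 - (i : ℕ)
  | Sum.inr t =>
      if (t : ℕ) = 0 then 1 else if (t : ℕ) = 1 then 0 else if (t : ℕ) = 2 then n + 2
      else n + 3

/-- `p_o = (b_1, b_2, e, x_1, …, x_n, d)` as a position function. -/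
def poVoteD (n : ℕ) : Fin n ⊕ Fin 4 → ℕ
  | Sum.inl i => n - (i : ℕ)
  | Sum.inr t =>
      if (t : ℕ) = 0 then n + 3 else if (t : ℕ) = 1 then n + 2 else if (t : ℕ) = 2 then 0
      else n + 1

/-!
The Rational Compromise of two votes consists of the outcomes that maximise the smaller of their two
positions. Whatever the manipulators do, `e` remains the winner, so `e` survives unless `b₁` or `b₂`
comes second. The outcome `b₂` is too far behind `d` for that. The outcome `b₁` catches up with `d`
only if both manipulators rank `b₁` first and `d` last, and then it also catches up with every `x i`
exactly when the two positions of `x i` add up to at most `X i`. The positions of the `x i` in one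
manipulator vote are distinct and positive, hence sum to at least `1 + ⋯ + n`; as the `X i` sum to
at most twice that, every inequality is tight and the positions are permutations of `1, …, n`.
-/

section DistinctPositive

variable {ι : Type*} {s : Finset ι} {f : ι → ℕ}

lemma card_mul_card_add_one_le_two_mul_sum (hf : Set.InjOn f s) (hpos : ∀ i ∈ s, 1 ≤ f i) :
    #s * (#s + 1) ≤ 2 * ∑ i ∈ s, f i := by
  have hinj : Set.InjOn (fun i => (f i : ℤ)) s := Nat.cast_injective.comp_injOn hf
  have hsum : ∑ k ∈ range #s, (1 + (k : ℤ)) ≤ ∑ i ∈ s, (f i : ℤ) := by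
    have h := sum_range_le_sum (s := s.image fun i => (f i : ℤ)) (c := 1)
      (forall_mem_image.2 fun i hi => mod_cast hpos i hi)
    rwa [card_image_of_injOn hinj, sum_image hinj] at h
  have hgauss : ∀ m : ℕ, 2 * ∑ k ∈ range m, (1 + (k : ℤ)) = m * (m + 1) := fun m => by
    induction m with
    | zero => simp
    | succ m ih => rw [sum_range_succ, mul_add, ih]; push_cast; ring
  zify
  linarith [hgauss #s]

lemma le_card_of_two_mul_sum_le (hf : Set.InjOn f s) (hpos : ∀ i ∈ s, 1 ≤ f i)
    (hsum : 2 * ∑ i ∈ s, f i ≤ #s * (#s + 1)) {i : ι} (hi : i ∈ s) : f i ≤ #s := by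
  -- The other `#s - 1` values already sum to at least `1 + ⋯ + (#s - 1)`.
  have hrest := card_mul_card_add_one_le_two_mul_sum (s := s.erase i) (hf.mono (by simp))
    fun j hj => hpos j (mem_of_mem_erase hj)
  rw [← add_sum_erase s f hi, ← card_erase_add_one hi] at hsum
  rw [← card_erase_add_one hi]
  linarith

end DistinctPositive

section Permutations

variable {n : ℕ} {f g X : Fin n → ℕ}

lemma exists_perm_add_one_eq (hf : Function.Injective f) (hpos : ∀ i, 1 ≤ f i)
    (hsum : 2 * ∑ i, f i ≤ n * (n + 1)) : ∃ σ : Equiv.Perm (Fin n), ∀ i, (σ i : ℕ) + 1 = f i := by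
  have hle : ∀ i, f i ≤ n := fun i => by
    simpa using le_card_of_two_mul_sum_le hf.injOn (fun i _ => hpos i) (by simpa using hsum)
      (mem_univ i)
  have hlt : ∀ i, f i - 1 < n := fun i => by have := hpos i; have := hle i; omega
  have hinj : Function.Injective fun i => (⟨f i - 1, hlt i⟩ : Fin n) := fun i j hij =>
    hf (Nat.sub_one_cancel (hpos i) (hpos j) (Fin.mk.inj_iff.1 hij))
  exact ⟨Equiv.ofBijective _ (Finite.injective_iff_bijective.1 hinj),
    fun i => Nat.sub_add_cancel (hpos i)⟩

lemma exists_perms_add_eq (hX : ∑ i, X i ≤ n * (n + 1))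
    (hf : Function.Injective f) (hf_pos : ∀ i, 1 ≤ f i)
    (hg : Function.Injective g) (hg_pos : ∀ i, 1 ≤ g i) (hle : ∀ i, f i + g i ≤ X i) :
    ∃ σ π : Equiv.Perm (Fin n), ∀ i, ((σ i : ℕ) + 1) + ((π i : ℕ) + 1) = X i := by
  have hf_sum : n * (n + 1) ≤ 2 * ∑ i, f i := by
    simpa using card_mul_card_add_one_le_two_mul_sum (s := univ) hf.injOn fun i _ => hf_pos i
  have hg_sum : n * (n + 1) ≤ 2 * ∑ i, g i := by
    simpa using card_mul_card_add_one_le_two_mul_sum (s := univ) hg.injOn fun i _ => hg_pos i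
  have hle_sum : ∑ i, (f i + g i) ≤ ∑ i, X i := sum_le_sum fun i _ => hle i
  have hadd : ∑ i, (f i + g i) = ∑ i, f i + ∑ i, g i := sum_add_distrib
  obtain ⟨σ, hσ⟩ := exists_perm_add_one_eq hf hf_pos (by omega)
  obtain ⟨π, hπ⟩ := exists_perm_add_one_eq hg hg_pos (by omega)
  refine ⟨σ, π, fun i => ?_⟩
  rw [hσ, hπ]
  exact (sum_eq_sum_iff_of_le fun i _ => hle i).1 (by omega) i (mem_univ i)

end Permutations

section RationalCompromise

lemma mem_topSet_inter_topSet {pt po : O → ℕ} {j : ℕ} {o : O} :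
    o ∈ topSet pt j ∩ topSet po j ↔ Fintype.card O - j ≤ min (pt o) (po o) := by
  simp [topSet]

theorem mem_RC_iff {pt po : O → ℕ} (hpo : ∀ o, po o < Fintype.card O) {o : O} :
    o ∈ RC pt po ↔ ∀ c, min (pt c) (po c) ≤ min (pt o) (po o) := by
  have hmin : ∀ c, min (pt c) (po c) < Fintype.card O := fun c =>
    (min_le_right _ _).trans_lt (hpo c)
  have hle_index : ∀ c, rcIndex pt po ≤ Fintype.card O - min (pt c) (po c) := fun c =>
    Nat.sInf_le ⟨Nat.sub_pos_of_lt (hmin c), c, mem_topSet_inter_topSet.2 (by omega)⟩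
  have hattained : ∃ c, Fintype.card O - rcIndex pt po ≤ min (pt c) (po c) := by
    obtain ⟨-, c, hc⟩ := Nat.sInf_mem
      (s := {j | 1 ≤ j ∧ (topSet pt j ∩ topSet po j).Nonempty})
      ⟨_, Nat.sub_pos_of_lt (hmin o), o, mem_topSet_inter_topSet.2 (by omega)⟩
    exact ⟨c, mem_topSet_inter_topSet.1 hc⟩
  rw [RC, mem_topSet_inter_topSet]
  constructor
  · intro ho c
    have := hmin c
    have := hle_index c
    omega
  · intro ho
    obtain ⟨c, hc⟩ := hattained
    exact hc.trans (ho c)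

end RationalCompromise

section PositionalScoring

variable {A : Type*} {sc : ℕ → ℤ} {tb : A → ℕ} {P : List (A → ℕ)} {c o : A}

/-- The pairwise comparison behind `swf`: the candidate `c` is ranked above `o`, by score or, in
case of equal scores, by the tie-breaking order. -/
abbrev Beats (sc : ℕ → ℤ) (tb : A → ℕ) (P : List (A → ℕ)) (c o : A) : Prop :=
  score sc P o < score sc P c ∨ (score sc P o = score sc P c ∧ tb c < tb o)

lemma beats_iff_score_le (htb : tb c < tb o) :
    Beats sc tb P c o ↔ score sc P o ≤ score sc P c := by
  simp only [Beats, htb, and_true, le_iff_lt_or_eq]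

lemma card_le_swf_add_card_iff [Fintype A] {S : Finset A} (hS : ∀ o ∈ S, ¬ Beats sc tb P c o) :
    Fintype.card A ≤ swf sc tb P c + #S ↔ ∀ o ∉ S, Beats sc tb P c o := by
  have hsub : univ.filter (Beats sc tb P c) ⊆ Sᶜ := fun o ho =>
    mem_compl.2 fun hoS => hS o hoS (mem_filter.1 ho).2
  have hcompl : #Sᶜ + #S = Fintype.card A := card_compl_add_card S
  calc Fintype.card A ≤ swf sc tb P c + #S
      ↔ #Sᶜ ≤ #(univ.filter (Beats sc tb P c)) := by rw [← hcompl, add_le_add_iff_right]; rfl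
    _ ↔ Sᶜ ⊆ univ.filter (Beats sc tb P c) :=
      ⟨fun h => (eq_of_subset_of_card_le hsub h).ge, card_le_card⟩
    _ ↔ ∀ o ∉ S, Beats sc tb P c o := by simp [subset_iff]

lemma score_bordaVec_append_pair (q₁ q₂ : A → ℕ) :
    score bordaVec (P ++ [q₁, q₂]) c = score bordaVec P c + (q₁ c + q₂ c) := by
  simp [score, bordaVec]

lemma IsVote.comp_equiv [Fintype A] {p : A → ℕ} (hp : IsVote p) (τ : A ≃ A) : IsVote (p ∘ τ) :=
  ⟨hp.1.comp τ.injective, fun o => hp.2 (τ o)⟩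

end PositionalScoring

section Outcomes

variable {n : ℕ}

@[elab_as_elim]
lemma outcome_cases {motive : Fin n ⊕ Fin 4 → Prop} (x : ∀ i, motive (xOutD n i))
    (b1 : motive (b1Out n)) (b2 : motive (b2Out n)) (d : motive (dOut n)) (e : motive (eOut n)) :
    ∀ o, motive o
  | Sum.inl i => x i
  | Sum.inr 0 => b1
  | Sum.inr 1 => b2
  | Sum.inr 2 => d
  | Sum.inr 3 => e

lemma card_outcomes (n : ℕ) : Fintype.card (Fin n ⊕ Fin 4) = n + 4 := by simp

lemma isVote_poVoteD (n : ℕ) : IsVote (poVoteD n) := by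
  constructor
  · rintro (i | s) (j | t) h
    · simp only [poVoteD] at h
      exact congrArg Sum.inl (Fin.ext (by omega))
    · simp only [poVoteD] at h
      split_ifs at h <;> omega
    · simp only [poVoteD] at h
      split_ifs at h <;> omega
    · simp only [poVoteD] at h
      exact congrArg Sum.inr (Fin.ext (by split_ifs at h <;> omega))
  · intro o
    rw [card_outcomes]
    rcases o with i | t
    · simp only [poVoteD]; omega
    · simp only [poVoteD]; split_ifs <;> omega

lemma poVoteD_eOut_lt_iff {o : Fin n ⊕ Fin 4} :
    poVoteD n (eOut n) < poVoteD n o ↔ o = b1Out n ∨ o = b2Out n := by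
  induction o using outcome_cases with
  | x i => simpa [poVoteD, xOutD, b1Out, b2Out, eOut] using by omega
  | b1 | b2 | d | e => simp [poVoteD, b1Out, b2Out, dOut, eOut]

lemma eOut_notMem_RC_poVoteD_iff {pt : Fin n ⊕ Fin 4 → ℕ} (he : n + 1 ≤ pt (eOut n)) :
    eOut n ∉ RC pt (poVoteD n) ↔ n + 2 ≤ pt (b1Out n) ∨ n + 2 ≤ pt (b2Out n) := by
  have he' : poVoteD n (eOut n) ≤ pt (eOut n) := he
  rw [mem_RC_iff (isVote_poVoteD n).2, min_eq_right he']
  simp only [not_forall, not_le, lt_min_iff, poVoteD_eOut_lt_iff, and_or_left, exists_or,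
    exists_eq_right]
  rfl

/-- The manipulator vote `(b₁, b₂, e, …, d)` that places `x i` at position `σ i + 1`, obtained from
`p_o` by permuting the `x i`. The reversal is there because `p_o` lists the `x i` by decreasing
position. -/
def permVote (σ : Equiv.Perm (Fin n)) : Fin n ⊕ Fin 4 → ℕ :=
  poVoteD n ∘ Equiv.sumCongr (σ.trans Fin.revPerm) (Equiv.refl _)

lemma isVote_permVote (σ : Equiv.Perm (Fin n)) : IsVote (permVote σ) :=
  (isVote_poVoteD n).comp_equiv _

lemma permVote_xOutD (σ : Equiv.Perm (Fin n)) (i : Fin n) :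
    permVote σ (xOutD n i) = (σ i : ℕ) + 1 := by
  change n - (Fin.rev (σ i) : ℕ) = (σ i : ℕ) + 1
  rw [Fin.val_rev]
  omega

end Outcomes

section Reduction

variable {n : ℕ} {X : Fin n → ℕ} {tb : Fin n ⊕ Fin 4 → ℕ} {P : List (Fin n ⊕ Fin 4 → ℕ)}
  {q₁ q₂ : Fin n ⊕ Fin 4 → ℕ}

/-- The manipulation instances that encode `X`. Only the differences to the score of `b₁` matter, so
the constant `C` of the reduction is written as that score. -/
structure IsReductionInstance (X : Fin n → ℕ) (tb : Fin n ⊕ Fin 4 → ℕ)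
    (P : List (Fin n ⊕ Fin 4 → ℕ)) : Prop where
  le_score_e : 4 * (n : ℤ) + 13 + score bordaVec P (b1Out n) ≤ score bordaVec P (eOut n)
  score_d : score bordaVec P (dOut n) = 2 * (n : ℤ) + 6 + score bordaVec P (b1Out n)
  score_x : ∀ i, score bordaVec P (xOutD n i) =
    2 * (n : ℤ) + 6 + score bordaVec P (b1Out n) - (X i : ℤ)
  score_b2_lt : score bordaVec P (b2Out n) < score bordaVec P (b1Out n)
  tb_d : tb (b1Out n) < tb (dOut n)
  tb_x : ∀ i, tb (b1Out n) < tb (xOutD n i)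

namespace IsReductionInstance

lemma score_le (h : IsReductionInstance X tb P) {o : Fin n ⊕ Fin 4} (ho : o ≠ eOut n) :
    score bordaVec P o ≤ 2 * (n : ℤ) + 6 + score bordaVec P (b1Out n) := by
  induction o using outcome_cases with
  | x i => have := h.score_x i; omega
  | b1 => omega
  | b2 => have := h.score_b2_lt; omega
  | d => exact h.score_d.le
  | e => exact absurd rfl ho

lemma score_lt_score_eOut (h : IsReductionInstance X tb P) (hq₁ : IsVote q₁) (hq₂ : IsVote q₂)
    {o : Fin n ⊕ Fin 4} (ho : o ≠ eOut n) :
    score bordaVec (P ++ [q₁, q₂]) o < score bordaVec (P ++ [q₁, q₂]) (eOut n) := by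
  have hP := h.score_le ho
  have he := h.le_score_e
  have ho₁ := (hq₁.2 o).trans_eq (card_outcomes n)
  have ho₂ := (hq₂.2 o).trans_eq (card_outcomes n)
  rw [score_bordaVec_append_pair, score_bordaVec_append_pair]
  omega

lemma le_swf_eOut (h : IsReductionInstance X tb P) (hq₁ : IsVote q₁) (hq₂ : IsVote q₂) :
    n + 3 ≤ swf bordaVec tb (P ++ [q₁, q₂]) (eOut n) := by
  have hcard := (card_le_swf_add_card_iff (S := {eOut n}) (tb := tb) (by simp)).2 fun o ho =>
    Or.inl (h.score_lt_score_eOut hq₁ hq₂ (notMem_singleton.1 ho))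
  rw [card_outcomes, card_singleton] at hcard
  omega

lemma le_swf_iff_beats (h : IsReductionInstance X tb P) (hq₁ : IsVote q₁) (hq₂ : IsVote q₂)
    {c : Fin n ⊕ Fin 4} (hc : c ≠ eOut n) :
    n + 2 ≤ swf bordaVec tb (P ++ [q₁, q₂]) c ↔
      ∀ o, o ≠ eOut n → o ≠ c → Beats bordaVec tb (P ++ [q₁, q₂]) c o := by
  have hce := h.score_lt_score_eOut hq₁ hq₂ hc
  have hiff := card_le_swf_add_card_iff (S := {eOut n, c}) (tb := tb) (c := c)
    (sc := bordaVec) (P := P ++ [q₁, q₂]) (by simp [hce.le, hce.ne'])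
  rw [card_outcomes, card_pair hc.symm] at hiff
  simpa using hiff

lemma swf_b2Out_lt (h : IsReductionInstance X tb P) (hq₁ : IsVote q₁) (hq₂ : IsVote q₂) :
    swf bordaVec tb (P ++ [q₁, q₂]) (b2Out n) < n + 2 := by
  by_contra! hle
  have hd := (h.le_swf_iff_beats hq₁ hq₂ (by simp [b2Out, eOut])).1 hle (dOut n)
    (by simp [dOut, eOut]) (by simp [dOut, b2Out])
  have hscore_d := h.score_d
  have hscore_b2 := h.score_b2_lt
  have hb₁ := (hq₁.2 (b2Out n)).trans_eq (card_outcomes n)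
  have hb₂ := (hq₂.2 (b2Out n)).trans_eq (card_outcomes n)
  simp only [Beats, score_bordaVec_append_pair] at hd
  omega

theorem eOut_notMem_RC_iff (h : IsReductionInstance X tb P) (hq₁ : IsVote q₁) (hq₂ : IsVote q₂) :
    eOut n ∉ RC (swf bordaVec tb (P ++ [q₁, q₂])) (poVoteD n) ↔
      (q₁ (b1Out n) = n + 3 ∧ q₂ (b1Out n) = n + 3) ∧ (q₁ (dOut n) = 0 ∧ q₂ (dOut n) = 0) ∧
        ∀ i, q₁ (xOutD n i) + q₂ (xOutD n i) ≤ X i := by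
  have he := h.le_swf_eOut hq₁ hq₂
  have hb2 := h.swf_b2Out_lt hq₁ hq₂
  rw [eOut_notMem_RC_poVoteD_iff (by omega), or_iff_left hb2.not_ge,
    h.le_swf_iff_beats hq₁ hq₂ (by simp [b1Out, eOut])]
  have hbound : ∀ o, q₁ o < n + 4 ∧ q₂ o < n + 4 := fun o =>
    ⟨(hq₁.2 o).trans_eq (card_outcomes n), (hq₂.2 o).trans_eq (card_outcomes n)⟩
  have hscore_d := h.score_d
  constructor
  · intro hbeats
    have hd := (beats_iff_score_le h.tb_d).1
      (hbeats (dOut n) (by simp [dOut, eOut]) (by simp [dOut, b1Out]))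
    have hx := fun i => (beats_iff_score_le (h.tb_x i)).1
      (hbeats (xOutD n i) (by simp [xOutD, eOut]) (by simp [xOutD, b1Out]))
    simp only [score_bordaVec_append_pair, h.score_x] at hd hx
    have hb1 := hbound (b1Out n)
    refine ⟨by omega, by omega, fun i => ?_⟩
    have := hx i
    omega
  · rintro ⟨⟨hb1₁, hb1₂⟩, ⟨hd₁, hd₂⟩, hx⟩ o
    induction o using outcome_cases with
    | x i =>
      intro _ _
      have hscore_x := h.score_x i
      have := hx i
      rw [beats_iff_score_le (h.tb_x i), score_bordaVec_append_pair, score_bordaVec_append_pair]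
      omega
    | b1 => exact fun _ hne => absurd rfl hne
    | b2 =>
      intro _ _
      have hscore_b2 := h.score_b2_lt
      have := hbound (b2Out n)
      rw [Beats, score_bordaVec_append_pair, score_bordaVec_append_pair]
      omega
    | d =>
      intro _ _
      rw [beats_iff_score_le h.tb_d, score_bordaVec_append_pair, score_bordaVec_append_pair]
      omega
    | e => exact fun hne => absurd rfl hne

end IsReductionInstance

end Reduction

theorem destructive_borda_reduction_correct_general {n : ℕ} {X : Fin n → ℕ}
    (hX : ∑ i, X i ≤ n * (n + 1)) {tb : Fin n ⊕ Fin 4 → ℕ} {P : List (Fin n ⊕ Fin 4 → ℕ)}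
    (h : IsReductionInstance X tb P) :
    (∃ PM : List (Fin n ⊕ Fin 4 → ℕ), PM.length = 2 ∧ (∀ q ∈ PM, IsVote q) ∧
        eOut n ∉ RC (swf bordaVec tb (P ++ PM)) (poVoteD n)) ↔
      ∃ σ π : Equiv.Perm (Fin n), ∀ i, ((σ i : ℕ) + 1) + ((π i : ℕ) + 1) = X i := by
  have hinj : Function.Injective (xOutD n) := Sum.inl_injective
  have hpos : ∀ {q : Fin n ⊕ Fin 4 → ℕ}, IsVote q → q (dOut n) = 0 → ∀ i, 1 ≤ q (xOutD n i) :=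
    fun hq hd i => Nat.one_le_iff_ne_zero.2 (hd ▸ hq.1.ne (by simp [xOutD, dOut]))
  constructor
  · rintro ⟨PM, hlen, hvotes, hRC⟩
    obtain ⟨q₁, q₂, rfl⟩ := List.length_eq_two.1 hlen
    have hq₁ : IsVote q₁ := hvotes q₁ (by simp)
    have hq₂ : IsVote q₂ := hvotes q₂ (by simp)
    obtain ⟨-, ⟨hd₁, hd₂⟩, hle⟩ := (h.eOut_notMem_RC_iff hq₁ hq₂).1 hRC
    exact exists_perms_add_eq hX (hq₁.1.comp hinj) (hpos hq₁ hd₁) (hq₂.1.comp hinj)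
      (hpos hq₂ hd₂) hle
  · rintro ⟨σ, π, hσπ⟩
    have hσ := isVote_permVote σ
    have hπ := isVote_permVote π
    refine ⟨[permVote σ, permVote π], rfl, by simp [hσ, hπ], (h.eOut_notMem_RC_iff hσ hπ).2
      ⟨⟨rfl, rfl⟩, ⟨rfl, rfl⟩, fun i => ?_⟩⟩
    rw [permVote_xOutD, permVote_xOutD, hσπ]

/-- correctness of the reduction for Theorem 7, NP-hardness of destructive
coalitional Borda manipulation: two Borda manipulator votes excluding `e` from the
Rational Compromise exist iff there are permutations `σ`, `π` of `{1, …, n}` with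
`σ(i) + π(i) = X_i` for all `i`. -/
theorem destructive_borda_reduction_correct
    (n : ℕ) (hn : 1 ≤ n) (X : Fin n → ℕ) (hXpos : ∀ i, 1 ≤ X i) (hXmono : Monotone X)
    (hXsum : ∑ i, X i = n * (n + 1)) (C y : ℤ) (hy : y < C)
    (tb : (Fin n ⊕ Fin 4) → ℕ) (htb : Function.Injective tb)
    (htbd : tb (b1Out n) < tb (dOut n)) (htbx : ∀ i, tb (b1Out n) < tb (xOutD n i))
    (P : List ((Fin n ⊕ Fin 4) → ℕ)) (hP : ∀ q ∈ P, IsVote q)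
    (hse : score bordaVec P (eOut n) = 4 * (n : ℤ) + 13 + C)
    (hsd : score bordaVec P (dOut n) = 2 * (n : ℤ) + 6 + C)
    (hsx : ∀ i, score bordaVec P (xOutD n i) = 2 * (n : ℤ) + 6 + C - (X i : ℤ))
    (hsb1 : score bordaVec P (b1Out n) = C)
    (hsb2 : score bordaVec P (b2Out n) = y)
    (hF : swf bordaVec tb P = ptTargetD n) :
    (∃ PM : List ((Fin n ⊕ Fin 4) → ℕ), PM.length = 2 ∧ (∀ q ∈ PM, IsVote q) ∧
        eOut n ∉ RC (swf bordaVec tb (P ++ PM)) (poVoteD n)) ↔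
      ∃ σ π : Equiv.Perm (Fin n), ∀ i, ((σ i : ℕ) + 1) + ((π i : ℕ) + 1) = X i :=
  destructive_borda_reduction_correct_general hXsum.le
    ⟨by rw [hse, hsb1], by rw [hsd, hsb1], fun i => by rw [hsx, hsb1], by rwa [hsb2, hsb1],
      htbd, htbx⟩
end

section
/- Lemma 3: fix an iteration i (1 ≤ i ≤ ⌈m/2⌉) of Algorithm 2 run with the x-approval rule, and let s_k(c) be the total score of candidate c in F(p⃗ ∪ p⃗_M) after all k stages. Then for all u_1, u_2 ∈ U^i, |s_k(u_1) − s_k(u_2)| ≤ 1, and for all d_1, d_2 ∈ D^i, |s_k(d_1) − s_k(d_2)| ≤ 1. -/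
open Finset
open scoped Classical

variable {O : Type*} [Fintype O] [DecidableEq O]

/-!
Within each of the groups `H` and `Hᶜ`, a stage of Algorithm 2 gives one point to a fixed number of
the currently lowest-ranked candidates of the group. Call a candidate raised when it gets the point.
A candidate raised at some stage ends at most one point ahead of any candidate of its group that was
passed over at some stage: with a constant number of raised candidates, whoever enters the raised
set pushes someone out and so cannot be far ahead, and a lead of one point puts the laggard first in
line. Every member of `U^i` ends at most as high as some candidate raised at some stage and at least
as high as some candidate passed over at some stage, since it was once ranked below and once above
earlier members; the exception is a seed that is raised at every stage, which nobody ever overtakes.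
The statement on `D^i` is the same one after negating scores and exchanging raised with passed over.
-/

section RaisesLowest

variable {α ι : Type*} [LinearOrder ι]

/-- The sort key of a candidate under scores `f`, ties being broken in favour of the smaller
`tb`-value: a candidate is ranked below another iff its key is smaller. -/
def rankKey (f : α → ℤ) (tb : α → ι) (c : α) : ℤ ×ₗ ιᵒᵈ :=
  toLex (f c, OrderDual.toDual (tb c))

lemma rankKey_lt_rankKey {f : α → ℤ} {tb : α → ι} {c d : α} :
    rankKey f tb c < rankKey f tb d ↔ f c < f d ∨ f c = f d ∧ tb d < tb c := by
  simp [rankKey, Prod.Lex.toLex_lt_toLex]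

lemma le_of_rankKey_lt {f : α → ℤ} {tb : α → ι} {c d : α}
    (h : rankKey f tb c < rankKey f tb d) : f c ≤ f d :=
  (rankKey_lt_rankKey.mp h).elim le_of_lt fun h => h.1.le

lemma rankKey_sub_toDual_lt {f : α → ℤ} {tb : α → ι} {c d : α} (a : ℤ) :
    rankKey (fun c => a - f c) (fun c => OrderDual.toDual (tb c)) c <
      rankKey (fun c => a - f c) (fun c => OrderDual.toDual (tb c)) d ↔
        rankKey f tb d < rankKey f tb c := by
  simp [rankKey_lt_rankKey, eq_comm]

/-- A score process `s` on the group `S` in which stage `t` gives one point to the members of the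
set `R t`, which is an initial segment of the ranking of `S` from below and whose size does not
depend on `t`. -/
structure RaisesLowest (S : Finset α) (tb : α → ι) (s : ℕ → α → ℤ) (R : ℕ → Finset α) :
    Prop where
  subset (t : ℕ) : R t ⊆ S
  card_eq (t t' : ℕ) : #(R t) = #(R t')
  mem_of_lt {t : ℕ} {c d : α} (hc : c ∈ S) (hd : d ∈ R t)
    (hcd : rankKey (s t) tb c < rankKey (s t) tb d) : c ∈ R t
  succ_of_mem {t : ℕ} {c : α} (hc : c ∈ R t) : s (t + 1) c = s t c + 1
  succ_of_notMem {t : ℕ} {c : α} (hc : c ∈ S) (hcR : c ∉ R t) : s (t + 1) c = s t c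

/-- The candidates generated from the seeds `B` by repeatedly adding members of `S` that, within
the first `k` stages, are ranked below a generated candidate at some time and above one at the next.
As the algorithm's votes reverse the current ranking, this is `U^i` for `S = H^i`, and `D^i` for
`S = O ∖ H^i` with all orders reversed. -/
inductive SwitchClosure (S : Finset α) (tb : α → ι) (s : ℕ → α → ℤ) (k : ℕ) (B : Finset α) :
    α → Prop
  | seed {u : α} (hu : u ∈ B) : SwitchClosure S tb s k B u
  | switch {u v v' : α} {t : ℕ} (hu : u ∈ S) (ht : t + 1 < k)
      (hv : SwitchClosure S tb s k B v) (huv : rankKey (s t) tb u < rankKey (s t) tb v)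
      (hv' : SwitchClosure S tb s k B v')
      (hvu : rankKey (s (t + 1)) tb v' < rankKey (s (t + 1)) tb u) : SwitchClosure S tb s k B u

namespace RaisesLowest

variable {S : Finset α} {tb : α → ι} {s : ℕ → α → ℤ} {R : ℕ → Finset α} {c d : α} {t k : ℕ}

/-- The process counting the points that a candidate has missed, which raises the complements of the
sets `R t`. -/
lemma dual [DecidableEq α] (h : RaisesLowest S tb s R) :
    RaisesLowest S (fun c => OrderDual.toDual (tb c)) (fun t c => t - s t c)
      (fun t => S \ R t) where
  subset _ := sdiff_subset
  card_eq t t' := by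
    rw [card_sdiff_of_subset (h.subset t), card_sdiff_of_subset (h.subset t'), h.card_eq t t']
  mem_of_lt {t c d} hc hd hcd := by
    rw [mem_sdiff] at hd ⊢
    exact ⟨hc, fun hcR => hd.2 (h.mem_of_lt hd.1 hcR ((rankKey_sub_toDual_lt _).mp hcd))⟩
  succ_of_mem hc := by
    rw [h.succ_of_notMem (mem_sdiff.mp hc).1 (mem_sdiff.mp hc).2]
    push_cast
    ring
  succ_of_notMem {t c} hc hcR := by
    have hcR : c ∈ R t := by simpa [hc] using hcR
    rw [h.succ_of_mem hcR]
    push_cast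
    ring

lemma le_of_mem_of_notMem (h : RaisesLowest S tb s R) (hd : d ∈ R t) (hc : c ∈ S)
    (hcR : c ∉ R t) : s t d ≤ s t c := by
  by_contra! hlt
  exact hcR (h.mem_of_lt hc hd (rankKey_lt_rankKey.mpr (Or.inl hlt)))

lemma monotone (h : RaisesLowest S tb s R) (hc : c ∈ S) : Monotone fun t => s t c := by
  refine monotone_nat_of_le_succ fun t => ?_
  by_cases hcR : c ∈ R t
  · exact (h.succ_of_mem hcR).symm ▸ (lt_add_one _).le
  · exact (h.succ_of_notMem hc hcR).ge

lemma eq_of_forall_notMem (h : RaisesLowest S tb s R) (hc : c ∈ S) (htk : t ≤ k)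
    (hcR : ∀ t < k, c ∉ R t) : s k c = s t c := by
  induction k, htk using Nat.le_induction with
  | base => rfl
  | succ k _ ih =>
    rw [h.succ_of_notMem hc (hcR k k.lt_succ_self), ih fun t ht => hcR t (ht.trans k.lt_succ_self)]

lemma succ_le_succ_add_one (h : RaisesLowest S tb s R) (hc : c ∈ S) (hd : d ∈ S)
    (hdc : s t d ≤ s t c + 1) : s (t + 1) d ≤ s (t + 1) c + 1 := by
  by_cases hdR : d ∈ R t
  · by_cases hcR : c ∈ R t
    · rw [h.succ_of_mem hdR, h.succ_of_mem hcR]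
      gcongr
    · rw [h.succ_of_mem hdR, h.succ_of_notMem hc hcR]
      gcongr
      exact h.le_of_mem_of_notMem hdR hc hcR
  · calc s (t + 1) d = s t d := h.succ_of_notMem hd hdR
      _ ≤ s t c + 1 := hdc
      _ ≤ s (t + 1) c + 1 := by gcongr; exact h.monotone hc t.le_succ

lemma le_add_one_of_le (h : RaisesLowest S tb s R) (hc : c ∈ S) (hd : d ∈ S) (htk : t ≤ k)
    (hdc : s t d ≤ s t c + 1) : s k d ≤ s k c + 1 := by
  induction k, htk using Nat.le_induction with
  | base => exact hdc
  | succ k _ ih => exact h.succ_le_succ_add_one hc hd ih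

lemma le_add_one_of_notMem_of_mem (h : RaisesLowest S tb s R) (hc : c ∈ S) (hcR : c ∉ R t)
    (htk : t ≤ k) (hd : d ∈ R k) : s k d ≤ s k c + 1 := by
  induction k, htk using Nat.le_induction generalizing d with
  | base => exact (h.le_of_mem_of_notMem hd hc hcR).trans (lt_add_one _).le
  | succ k _ ih =>
    have le_of_mem {e : α} (he : e ∈ R k) : s (k + 1) e ≤ s (k + 1) c + 1 :=
      h.succ_le_succ_add_one hc (h.subset k he) (ih he)
    by_cases hdR : d ∈ R k
    · exact le_of_mem hdR
    · -- `d` has displaced some `e`, which is at least as high as `d`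
      obtain ⟨e, heR, he⟩ : ∃ e ∈ R k, e ∉ R (k + 1) := not_subset.mp fun hsub =>
        hdR (eq_of_subset_of_card_le hsub (h.card_eq _ _).le ▸ hd)
      exact (h.le_of_mem_of_notMem hd (h.subset k heR) he).trans (le_of_mem heR)

lemma le_add_one_of_exists_mem_of_exists_notMem (h : RaisesLowest S tb s R) (hc : c ∈ S)
    (hd : d ∈ S) (hcR : ∃ t < k, c ∉ R t) (hdR : ∃ t < k, d ∈ R t) : s k d ≤ s k c + 1 := by
  classical
  obtain ⟨a, hak, hca⟩ := hcR
  obtain ⟨b, hbk, hdb⟩ := hdR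
  obtain hab | hba := le_total a b
  · exact h.le_add_one_of_le hc hd hbk.le (h.le_add_one_of_notMem_of_mem hc hca hab hdb)
  · have := h.dual.le_add_one_of_notMem_of_mem hd (by simp [hdb]) hba (mem_sdiff.mpr ⟨hc, hca⟩)
    exact h.le_add_one_of_le hc hd hak.le (by linarith)

lemma exists_raised_ge_of_le (h : RaisesLowest S tb s R) (hc : c ∈ S) (hd : d ∈ S) (htk : t ≤ k)
    (hcd : s t c ≤ s t d) (hex : ∃ e ∈ S, (∃ t < k, e ∈ R t) ∧ s k d ≤ s k e) :
    ∃ e ∈ S, (∃ t < k, e ∈ R t) ∧ s k c ≤ s k e := by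
  by_cases hcR : ∃ t < k, c ∈ R t
  · exact ⟨c, hc, hcR, le_rfl⟩
  · push Not at hcR
    obtain ⟨e, he, heR, hde⟩ := hex
    refine ⟨e, he, heR, ?_⟩
    calc s k c = s t c := h.eq_of_forall_notMem hc htk hcR
      _ ≤ s t d := hcd
      _ ≤ s k d := h.monotone hd htk
      _ ≤ s k e := hde

lemma exists_notRaised_le_of_le (h : RaisesLowest S tb s R) (hc : c ∈ S) (hd : d ∈ S) (htk : t ≤ k)
    (hdc : s t d ≤ s t c) (hex : ∃ e ∈ S, (∃ t < k, e ∉ R t) ∧ s k e ≤ s k d) :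
    ∃ e ∈ S, (∃ t < k, e ∉ R t) ∧ s k e ≤ s k c := by
  classical
  obtain ⟨e, he, ⟨a, hak, hea⟩, hed⟩ := hex
  obtain ⟨e', he', ⟨b, hbk, heb⟩, hce⟩ := h.dual.exists_raised_ge_of_le hc hd htk (by linarith)
    ⟨e, he, ⟨a, hak, mem_sdiff.mpr ⟨he, hea⟩⟩, by linarith⟩
  exact ⟨e', he', ⟨b, hbk, (mem_sdiff.mp heb).2⟩, by linarith⟩

variable {B : Finset α} {u u₁ u₂ : α}

lemma mem_of_switchClosure (h : RaisesLowest S tb s R) (hB : B ⊆ R 0)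
    (hu : SwitchClosure S tb s k B u) : u ∈ S := by
  cases hu with
  | seed hu => exact h.subset 0 (hB hu)
  | switch hu => exact hu

lemma exists_raised_ge_of_switchClosure (h : RaisesLowest S tb s R) (hk : 0 < k) (hB : B ⊆ R 0)
    (hu : SwitchClosure S tb s k B u) : ∃ v ∈ S, (∃ t < k, v ∈ R t) ∧ s k u ≤ s k v := by
  induction hu with
  | seed hu => exact ⟨_, h.subset 0 (hB hu), ⟨0, hk, hB hu⟩, le_rfl⟩
  | switch hu ht hv huv _ _ ih _ =>
    exact h.exists_raised_ge_of_le hu (h.mem_of_switchClosure hB hv) (by omega)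
      (le_of_rankKey_lt huv) ih

lemma exists_notRaised_le_of_switchClosure (h : RaisesLowest S tb s R) (hB : B ⊆ R 0)
    (hBR : ∀ b ∈ B, ∃ t < k, b ∉ R t) (hu : SwitchClosure S tb s k B u) :
    ∃ v ∈ S, (∃ t < k, v ∉ R t) ∧ s k v ≤ s k u := by
  induction hu with
  | seed hu => exact ⟨_, h.subset 0 (hB hu), hBR _ hu, le_rfl⟩
  | switch hu ht _ _ hv' hvu _ ih =>
    exact h.exists_notRaised_le_of_le hu (h.mem_of_switchClosure hB hv') ht.le
      (le_of_rankKey_lt hvu) ih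

lemma mem_seed_of_switchClosure (h : RaisesLowest S tb s R) (hsub : (B : Set α).Subsingleton)
    (hBR : ∀ b ∈ B, ∀ t < k, b ∈ R t) (hu : SwitchClosure S tb s k B u) : u ∈ B := by
  induction hu with
  | seed hu => exact hu
  | @switch u v v' t hu ht _ huv _ hvu hv hv' =>
    obtain rfl : v = v' := hsub hv hv'
    have hvR := hBR v hv t (by omega)
    have huR := h.mem_of_lt hu hvR huv
    have huv' : rankKey (s (t + 1)) tb u < rankKey (s (t + 1)) tb v := by
      simpa [rankKey_lt_rankKey, h.succ_of_mem hvR, h.succ_of_mem huR] using huv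
    exact absurd hvu huv'.asymm

lemma abs_sub_le_one_of_switchClosure (h : RaisesLowest S tb s R) (hB : B ⊆ R 0)
    (hsub : (B : Set α).Subsingleton) (h₁ : SwitchClosure S tb s k B u₁)
    (h₂ : SwitchClosure S tb s k B u₂) : |s k u₁ - s k u₂| ≤ 1 := by
  by_cases hBR : ∃ b ∈ B, ∃ t < k, b ∉ R t
  · obtain ⟨b, hb, t, htk, hbR⟩ := hBR
    have le_add_one {u u' : α} (hu : SwitchClosure S tb s k B u)
        (hu' : SwitchClosure S tb s k B u') : s k u ≤ s k u' + 1 := by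
      obtain ⟨v, hv, hvR, huv⟩ := h.exists_raised_ge_of_switchClosure (by omega) hB hu
      obtain ⟨v', hv', hvR', huv'⟩ :=
        h.exists_notRaised_le_of_switchClosure hB (fun b' hb' => ⟨t, htk, hsub hb hb' ▸ hbR⟩) hu'
      linarith [h.le_add_one_of_exists_mem_of_exists_notMem hv' hv hvR' hvR]
    exact abs_sub_le_iff.mpr
      ⟨by linarith [le_add_one h₁ h₂], by linarith [le_add_one h₂ h₁]⟩
  · push Not at hBR
    obtain rfl : u₁ = u₂ := hsub (h.mem_seed_of_switchClosure hsub hBR h₁)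
      (h.mem_seed_of_switchClosure hsub hBR h₂)
    simp

end RaisesLowest

end RaisesLowest

section Ranking

variable {α β : Type*} [LinearOrder β]

lemma card_filter_lt_lt_card_filter_lt {r : α → β} {S : Finset α} {a b : α} (ha : a ∈ S) :
    #{c ∈ S | r c < r a} < #{c ∈ S | r c < r b} ↔ r a < r b := by
  refine ⟨fun h => ?_, fun h => card_lt_card ⟨?_, fun hsub => ?_⟩⟩
  · by_contra! hba
    exact h.not_ge (card_le_card (monotone_filter_right S fun _ _ hc => hc.trans_le hba))
  · exact monotone_filter_right S fun _ _ hc => lt_trans hc h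
  · simpa using hsub (mem_filter.mpr ⟨ha, h⟩)

lemma card_filter_gt_add_card_filter_lt {r : α → β} (hr : Function.Injective r) {S : Finset α}
    {a : α} (ha : a ∈ S) : #{c ∈ S | r a < r c} + #{c ∈ S | r c < r a} + 1 = #S := by
  classical
  have hge : ({c ∈ S | ¬ r a < r c} : Finset α) = insert a {c ∈ S | r c < r a} := by
    ext c
    rw [mem_filter, mem_insert, mem_filter, not_lt, le_iff_lt_or_eq, hr.eq_iff]
    grind
  rw [← card_filter_add_card_filter_not (s := S) (r a < r ·), hge,
    card_insert_of_notMem (by simp), add_assoc]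

variable {r : α → ℕ} {S : Finset α}

lemma botWithin_mono (r : α → ℕ) (S : Finset α) : Monotone (botWithin r S) :=
  fun _ _ hmn => monotone_filter_right S fun _ _ h => lt_of_lt_of_le h hmn

lemma topWithin_mono (r : α → ℕ) (S : Finset α) : Monotone (topWithin r S) :=
  fun _ _ hmn => monotone_filter_right S fun _ _ h => lt_of_lt_of_le h hmn

lemma mem_botWithin_of_lt {n : ℕ} {a b : α} (ha : a ∈ S) (hb : b ∈ botWithin r S n)
    (hab : r a < r b) : a ∈ botWithin r S n :=
  mem_filter.mpr ⟨ha, ((card_filter_lt_lt_card_filter_lt ha).mpr hab).trans (mem_filter.mp hb).2⟩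

lemma botWithin_one_subsingleton (hr : Function.Injective r) (S : Finset α) :
    (botWithin r S 1 : Set α).Subsingleton := by
  intro a ha b hb
  simp only [botWithin, mem_coe, mem_filter, Nat.lt_one_iff, card_eq_zero, filter_eq_empty_iff,
    not_lt] at ha hb
  exact hr (le_antisymm (ha.2 hb.1) (hb.2 ha.1))

lemma topWithin_one_subsingleton (hr : Function.Injective r) (S : Finset α) :
    (topWithin r S 1 : Set α).Subsingleton := by
  intro a ha b hb
  simp only [topWithin, mem_coe, mem_filter, Nat.lt_one_iff, card_eq_zero, filter_eq_empty_iff,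
    not_lt] at ha hb
  exact hr (le_antisymm (hb.2 ha.1) (ha.2 hb.1))

lemma sdiff_botWithin [DecidableEq α] (hr : Function.Injective r) (S : Finset α) (n : ℕ) :
    S \ botWithin r S n = topWithin r S (#S - n) := by
  ext a
  simp only [botWithin, topWithin, mem_sdiff, mem_filter]
  by_cases ha : a ∈ S
  · have := card_filter_gt_add_card_filter_lt hr ha
    simp only [ha, true_and]
    omega
  · simp [ha]

lemma card_botWithin (hr : Function.Injective r) (S : Finset α) (n : ℕ) :
    #(botWithin r S n) = min #S n := by
  set rank : α → ℕ := fun a => #{c ∈ S | r c < r a}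
  have rank_injOn : Set.InjOn rank S := by
    intro a ha b hb hab
    refine hr (le_antisymm ?_ ?_) <;> by_contra! hlt
    · exact ((card_filter_lt_lt_card_filter_lt hb).mpr hlt).ne' hab
    · exact ((card_filter_lt_lt_card_filter_lt ha).mpr hlt).ne hab
  have rank_lt {a : α} (ha : a ∈ S) : rank a < #S :=
    card_lt_card (filter_ssubset.mpr ⟨a, ha, lt_irrefl _⟩)
  have image_rank : S.image rank = range #S :=
    eq_of_subset_of_card_le (image_subset_iff.mpr fun a ha => mem_range.mpr (rank_lt ha))
      (by rw [card_image_of_injOn rank_injOn, card_range])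
  calc #(botWithin r S n) = #((botWithin r S n).image rank) :=
        (card_image_of_injOn (rank_injOn.mono (filter_subset _ _))).symm
    _ = #{j ∈ S.image rank | j < n} := by rw [filter_image]; rfl
    _ = #(range (min #S n)) := by
        rw [image_rank]
        congr 1
        ext j
        simp
    _ = min #S n := card_range _

variable [Fintype α] {sc : ℕ → ℤ} {tb : α → ℕ} {P : List (α → ℕ)}

lemma swf_lt_swf {a b : α} : swf sc tb P a < swf sc tb P b ↔
    rankKey (score sc P) tb a < rankKey (score sc P) tb b := by
  have swf_eq (c : α) :
      swf sc tb P c = #{c' | rankKey (score sc P) tb c' < rankKey (score sc P) tb c} := by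
    simp only [swf, rankKey_lt_rankKey]
  rw [swf_eq, swf_eq, card_filter_lt_lt_card_filter_lt (mem_univ a)]

lemma swf_injective (htb : Function.Injective tb) : Function.Injective (swf sc tb P) := by
  intro a b hab
  have hkey : rankKey (score sc P) tb a = rankKey (score sc P) tb b :=
    le_antisymm (not_lt.mp fun h => (swf_lt_swf.mpr h).ne' hab)
      (not_lt.mp fun h => (swf_lt_swf.mpr h).ne hab)
  simp only [rankKey, EmbeddingLike.apply_eq_iff_eq, Prod.mk.injEq] at hkey
  exact htb hkey.2

end Ranking

section Algorithm

variable {sc : ℕ → ℤ} {tb : O → ℕ} {P : List (O → ℕ)} {H S : Finset O} {r pt : O → ℕ}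
  {o o' d d₁ d₂ u u₁ u₂ : O} {k n t : ℕ}

lemma buildVote_of_mem (ho : o ∈ H) : buildVote r H o = #Hᶜ + #{c ∈ H | r o < r c} := by
  rw [buildVote, if_pos ho, card_compl]

lemma buildVote_of_notMem (ho : o ∉ H) : buildVote r H o = #{c ∈ Hᶜ | r o < r c} := by
  rw [buildVote, if_neg ho]
  congr 1
  ext c
  simp

lemma buildVote_lt_buildVote (ho : o ∈ H ↔ o' ∈ H) :
    buildVote r H o < buildVote r H o' ↔ r o' < r o := by
  by_cases h : o ∈ H
  · rw [buildVote_of_mem h, buildVote_of_mem (ho.mp h), add_lt_add_iff_left]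
    exact card_filter_lt_lt_card_filter_lt (r := OrderDual.toDual ∘ r) h
  · rw [buildVote_of_notMem h, buildVote_of_notMem (ho.not.mp h)]
    exact card_filter_lt_lt_card_filter_lt (r := OrderDual.toDual ∘ r) (mem_compl.mpr h)

lemma buildVote_lt_buildVote_of_notMem_of_mem (ho : o ∉ H) (ho' : o' ∈ H) :
    buildVote r H o < buildVote r H o' := by
  rw [buildVote_of_notMem ho, buildVote_of_mem ho']
  exact Nat.lt_add_right _ (card_lt_card (filter_ssubset.mpr ⟨o, mem_compl.mpr ho, lt_irrefl _⟩))

/-- The vote built from any ranking and the set `H` gives, under the scoring vector `sc`, one point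
to the `n` lowest-ranked members of the group `S` and none to its other members. -/
def ApprovesLowest (sc : ℕ → ℤ) (H S : Finset O) (n : ℕ) : Prop :=
  ∀ r : O → ℕ, Function.Injective r → ∀ c ∈ S,
    sc (buildVote r H c) = if c ∈ botWithin r S n then 1 else 0

lemma approvesLowest_approvalVec (H : Finset O) (x : ℕ) :
    ApprovesLowest (approvalVec (Fintype.card O) x) H H x := by
  intro r hr c hc
  have hcard := card_filter_gt_add_card_filter_lt hr hc
  have hcompl := card_add_card_compl H
  rw [buildVote_of_mem hc, approvalVec]
  simp only [botWithin, mem_filter, hc, true_and]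
  exact if_congr (by omega) rfl rfl

lemma approvesLowest_approvalVec_compl (H : Finset O) (x : ℕ) :
    ApprovesLowest (approvalVec (Fintype.card O) x) H Hᶜ (x - #H) := by
  intro r hr c hc
  have hcard := card_filter_gt_add_card_filter_lt hr hc
  have hcompl := card_add_card_compl H
  rw [buildVote_of_notMem (mem_compl.mp hc), approvalVec]
  simp only [botWithin, mem_filter, hc, true_and]
  exact if_congr (by omega) rfl rfl

/-- The score `s_t(c)` after `t` stages of Algorithm 2 run with an arbitrary set `H` in place of
`H^i`. -/
def stageScore (sc : ℕ → ℤ) (tb : O → ℕ) (P : List (O → ℕ)) (H : Finset O) (t : ℕ) (c : O) : ℤ :=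
  score sc (P ++ stageProfile sc tb P H t) c

/-- The social ranking `F(p⃗ ∪ p⃗_M)` after `t` stages of Algorithm 2 run with an arbitrary set `H`
in place of `H^i`. -/
def stageRank (sc : ℕ → ℤ) (tb : O → ℕ) (P : List (O → ℕ)) (H : Finset O) (t : ℕ) : O → ℕ :=
  swf sc tb (P ++ stageProfile sc tb P H t)

lemma stageRank_zero : stageRank sc tb P H 0 = swf sc tb P := by
  rw [stageRank, stageProfile, List.append_nil]

lemma stageRank_injective (htb : Function.Injective tb) :
    Function.Injective (stageRank sc tb P H t) :=
  swf_injective htb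

lemma stageRank_lt_stageRank : stageRank sc tb P H t o < stageRank sc tb P H t o' ↔
    rankKey (stageScore sc tb P H t) tb o < rankKey (stageScore sc tb P H t) tb o' :=
  swf_lt_swf

lemma stageVote_succ : stageVote sc tb P H (t + 1) = buildVote (stageRank sc tb P H t) H :=
  rfl

lemma stageScore_succ (t : ℕ) (c : O) : stageScore sc tb P H (t + 1) c =
    stageScore sc tb P H t c + sc (stageVote sc tb P H (t + 1) c) := by
  simp [stageScore, stageVote, score, stageProfile, add_assoc]

lemma stageVote_succ_lt_stageVote_succ (ho : o ∈ H ↔ o' ∈ H) :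
    stageVote sc tb P H (t + 1) o < stageVote sc tb P H (t + 1) o' ↔
      rankKey (stageScore sc tb P H t) tb o' < rankKey (stageScore sc tb P H t) tb o := by
  rw [stageVote_succ, buildVote_lt_buildVote ho, stageRank_lt_stageRank]

lemma ApprovesLowest.raisesLowest (hsc : ApprovesLowest sc H S n) (htb : Function.Injective tb)
    (P : List (O → ℕ)) :
    RaisesLowest S tb (stageScore sc tb P H) fun t => botWithin (stageRank sc tb P H t) S n where
  subset _ := filter_subset _ _
  card_eq t t' := by
    rw [card_botWithin (stageRank_injective htb), card_botWithin (stageRank_injective htb)]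
  mem_of_lt hc hd hcd := mem_botWithin_of_lt hc hd (stageRank_lt_stageRank.mpr hcd)
  succ_of_mem hc := by
    rw [stageScore_succ, stageVote_succ,
      hsc _ (stageRank_injective htb) _ (filter_subset _ _ hc), if_pos hc]
  succ_of_notMem hc hcR := by
    rw [stageScore_succ, stageVote_succ, hsc _ (stageRank_injective htb) _ hc, if_neg hcR,
      add_zero]

lemma Uaux_subset : Uaux sc tb P pt H k n ⊆ H := by
  induction n with
  | zero => exact filter_subset _ _
  | succ n ih =>
    refine union_subset ih fun u hu => ?_
    obtain ⟨-, l, -, -, ⟨v, hv, hvu⟩, -⟩ := mem_filter.mp hu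
    by_contra huH
    exact hvu.asymm (buildVote_lt_buildVote_of_notMem_of_mem huH (ih hv))

lemma Daux_subset_compl : Daux sc tb P pt H k n ⊆ Hᶜ := by
  induction n with
  | zero => exact filter_subset _ _
  | succ n ih =>
    refine union_subset ih fun d hd => ?_
    obtain ⟨-, l, -, -, ⟨v, hv, hdv⟩, -⟩ := mem_filter.mp hd
    exact mem_compl.mpr fun hdH =>
      hdv.asymm (buildVote_lt_buildVote_of_notMem_of_mem (mem_compl.mp (ih hv)) hdH)

lemma Dset_subset_compl : Dset sc tb P pt H k ⊆ Hᶜ := fun _ hd =>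
  (mem_filter.mp hd).2.elim fun _ hd => Daux_subset_compl hd

lemma switchClosure_of_mem_Uaux (hu : u ∈ Uaux sc tb P pt H k n) :
    SwitchClosure H tb (stageScore sc tb P H) k (botWithin pt H 1) u := by
  induction n generalizing u with
  | zero => exact .seed hu
  | succ n ih =>
    have huH := Uaux_subset hu
    obtain hu | hu := mem_union.mp hu
    · exact ih hu
    obtain ⟨-, l, hl, hlk, ⟨v, hv, hvu⟩, v', hv', huv'⟩ := mem_filter.mp hu
    obtain ⟨t, rfl⟩ := Nat.exists_eq_add_of_le' hl
    rw [stageVote_succ_lt_stageVote_succ (iff_of_true (Uaux_subset hv) huH)] at hvu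
    rw [stageVote_succ_lt_stageVote_succ (iff_of_true huH (Uaux_subset hv'))] at huv'
    exact .switch huH hlk (ih hv) hvu (ih hv') huv'

lemma switchClosure_of_mem_Daux (hd : d ∈ Daux sc tb P pt H k n) :
    SwitchClosure Hᶜ (fun c => OrderDual.toDual (tb c)) (fun t c => t - stageScore sc tb P H t c) k
      (topWithin pt Hᶜ 1) d := by
  induction n generalizing d with
  | zero => exact .seed hd
  | succ n ih =>
    have hdH := Daux_subset_compl hd
    have notMem {v : O} (hv : v ∈ Daux sc tb P pt H k n) : v ∉ H :=
      mem_compl.mp (Daux_subset_compl hv)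
    obtain hd | hd := mem_union.mp hd
    · exact ih hd
    obtain ⟨-, l, hl, hlk, ⟨v, hv, hdv⟩, v', hv', hvd'⟩ := mem_filter.mp hd
    obtain ⟨t, rfl⟩ := Nat.exists_eq_add_of_le' hl
    rw [stageVote_succ_lt_stageVote_succ (iff_of_false (mem_compl.mp hdH) (notMem hv))] at hdv
    rw [stageVote_succ_lt_stageVote_succ (iff_of_false (notMem hv') (mem_compl.mp hdH))] at hvd'
    exact .switch hdH hlk (ih hv) ((rankKey_sub_toDual_lt _).mpr hdv)
      (ih hv') ((rankKey_sub_toDual_lt _).mpr hvd')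

lemma abs_stageScore_sub_le_one_of_mem_Uset (hsc : ApprovesLowest sc H H n) (hn : 1 ≤ n)
    (htb : Function.Injective tb) (h₁ : u₁ ∈ Uset sc tb P (swf sc tb P) H k)
    (h₂ : u₂ ∈ Uset sc tb P (swf sc tb P) H k) :
    |stageScore sc tb P H k u₁ - stageScore sc tb P H k u₂| ≤ 1 := by
  obtain ⟨n₁, h₁⟩ := (mem_filter.mp h₁).2
  obtain ⟨n₂, h₂⟩ := (mem_filter.mp h₂).2
  have seed_subset : botWithin (swf sc tb P) H 1 ⊆ botWithin (stageRank sc tb P H 0) H n := by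
    rw [stageRank_zero]
    exact botWithin_mono _ H hn
  exact (hsc.raisesLowest htb P).abs_sub_le_one_of_switchClosure seed_subset
    (botWithin_one_subsingleton (swf_injective htb) H) (switchClosure_of_mem_Uaux h₁)
    (switchClosure_of_mem_Uaux h₂)

lemma abs_stageScore_sub_le_one_of_mem_Dset (hsc : ApprovesLowest sc H Hᶜ n) (hn : n < #Hᶜ)
    (htb : Function.Injective tb) (h₁ : d₁ ∈ Dset sc tb P (swf sc tb P) H k)
    (h₂ : d₂ ∈ Dset sc tb P (swf sc tb P) H k) :
    |stageScore sc tb P H k d₁ - stageScore sc tb P H k d₂| ≤ 1 := by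
  obtain ⟨n₁, h₁⟩ := (mem_filter.mp h₁).2
  obtain ⟨n₂, h₂⟩ := (mem_filter.mp h₂).2
  have seed_subset :
      topWithin (swf sc tb P) Hᶜ 1 ⊆ Hᶜ \ botWithin (stageRank sc tb P H 0) Hᶜ n := by
    rw [stageRank_zero, sdiff_botWithin (swf_injective htb)]
    exact topWithin_mono _ Hᶜ (Nat.sub_pos_of_lt hn)
  have := (hsc.raisesLowest htb P).dual.abs_sub_le_one_of_switchClosure seed_subset
    (topWithin_one_subsingleton (swf_injective htb) Hᶜ) (switchClosure_of_mem_Daux h₁)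
    (switchClosure_of_mem_Daux h₂)
  rwa [sub_sub_sub_cancel_left, abs_sub_comm] at this

theorem lemma3_scores_close_general (x : ℕ) (hx1 : 1 ≤ x) (hx2 : x < Fintype.card O)
    (tb : O → ℕ) (P : List (O → ℕ)) (H : Finset O) (k : ℕ) (htb : Function.Injective tb) :
    let sc := approvalVec (Fintype.card O) x
    (∀ u1 ∈ Uset sc tb P (swf sc tb P) H k, ∀ u2 ∈ Uset sc tb P (swf sc tb P) H k,
        |stageScore sc tb P H k u1 - stageScore sc tb P H k u2| ≤ 1) ∧
      ∀ d1 ∈ Dset sc tb P (swf sc tb P) H k, ∀ d2 ∈ Dset sc tb P (swf sc tb P) H k,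
        |stageScore sc tb P H k d1 - stageScore sc tb P H k d2| ≤ 1 := by
  refine ⟨fun u1 h₁ u2 h₂ => ?_, fun d1 h₁ d2 h₂ => ?_⟩
  · exact abs_stageScore_sub_le_one_of_mem_Uset (approvesLowest_approvalVec H x) hx1 htb h₁ h₂
  · have hpos : 0 < #Hᶜ := card_pos.mpr ⟨d1, Dset_subset_compl h₁⟩
    have hcompl := card_add_card_compl H
    exact abs_stageScore_sub_le_one_of_mem_Dset (approvesLowest_approvalVec_compl H x) (by omega)
      htb h₁ h₂

end Algorithm

/-- Lemma 3: at a fixed iteration `i` of Algorithm 2 with the x-approval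
rule, after all `k` stages any two members of `U^i` have scores differing by at most one,
and likewise for `D^i`. -/
theorem lemma3_scores_close
    (x : ℕ) (hx1 : 1 ≤ x) (hx2 : x < Fintype.card O)
    (tb : O → ℕ) (P : List (O → ℕ)) (po : O → ℕ) (p : O) (i k : ℕ)
    (htb : Function.Injective tb) (hP : ∀ q ∈ P, IsVote q) (hpo : IsVote po)
    (hi1 : 1 ≤ i) (hi2 : i ≤ (Fintype.card O + 1) / 2) :
    (∀ u1 ∈ UsetAlg (approvalVec (Fintype.card O) x) tb P po p i k,
        ∀ u2 ∈ UsetAlg (approvalVec (Fintype.card O) x) tb P po p i k,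
          |stageScoreAlg (approvalVec (Fintype.card O) x) tb P po p i k u1 -
              stageScoreAlg (approvalVec (Fintype.card O) x) tb P po p i k u2| ≤ 1) ∧
      ∀ d1 ∈ DsetAlg (approvalVec (Fintype.card O) x) tb P po p i k,
        ∀ d2 ∈ DsetAlg (approvalVec (Fintype.card O) x) tb P po p i k,
          |stageScoreAlg (approvalVec (Fintype.card O) x) tb P po p i k d1 -
              stageScoreAlg (approvalVec (Fintype.card O) x) tb P po p i k d2| ≤ 1 :=
  lemma3_scores_close_general x hx1 hx2 tb P (Hset _ po p i) k htb
end
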